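/- arXiv:1712.09172 — 2 statements merged into one kernel-verified Lean document; each statement's English description precedes it below -/
import Mathlib

section
/- Let N ≥ 1 and let pᵢ, p̄ⱼ, qᵢ, q̄ⱼ, ξ_{i0}, ξ̄_{j0}, η_{i0}, η̄_{j0} (1 ≤ i, j ≤ N) be complex constants with pᵢ + p̄ⱼ ≠ 0 and qᵢ + q̄ⱼ ≠ 0 for all i, j. For real variables (x₁, x₂, y₁) set ξᵢ = pᵢx₁ + pᵢ²x₂ + ξ_{i0}, ξ̄ⱼ = p̄ⱼx₁ − p̄ⱼ²x₂ + ξ̄_{j0}, ηᵢ = qᵢy₁ + η_{i0}, η̄ⱼ = q̄ⱼy₁ + η̄_{j0}. Let A be the N×N matrix with A_{ij} = e^{ξᵢ+ξ̄ⱼ}/(pᵢ+p̄ⱼ) + e^{ηᵢ+η̄ⱼ}/(qᵢ+q̄ⱼ), τ₀ = det A, and τ₁ = det [[A, Φᵀ],[−Ψ̄, 0]] with Φᵢ = e^{ξᵢ}, Ψ̄ⱼ = e^{η̄ⱼ}. Then for all (x₁, x₂, y₁): (∂_{x₂}τ₁)·τ₀ − τ₁·(∂_{x₂}τ₀) − (∂_{x₁}²τ₁)·τ₀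 + 2(∂_{x₁}τ₁)·(∂_{x₁}τ₀) − τ₁·(∂_{x₁}²τ₀) = 0; equivalently the Hirota bilinear equation (D_{x₂} − D_{x₁}²)τ₁·τ₀ = 0 holds. -/
open Complex Matrix

/-- The Gram matrix `A` of the two-component KP hierarchy:
`A_{ij} = e^{ξᵢ+ξ̄ⱼ}/(pᵢ+p̄ⱼ) + e^{ηᵢ+η̄ⱼ}/(qᵢ+q̄ⱼ)` with
`ξᵢ = pᵢx₁ + pᵢ²x₂ + ξ_{i0}`, `ξ̄ⱼ = p̄ⱼx₁ - p̄ⱼ²x₂ + ξ̄_{j0}`,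
`ηᵢ = qᵢy₁ + η_{i0}`, `η̄ⱼ = q̄ⱼy₁ + η̄_{j0}`. -/
noncomputable def gramA (N : ℕ) (p pb q qb ξ0 ξb0 η0 ηb0 : Fin N → ℂ)
    (x₁ x₂ y₁ : ℝ) : Matrix (Fin N) (Fin N) ℂ :=
  Matrix.of fun i j =>
    Complex.exp ((p i * (x₁ : ℂ) + (p i) ^ 2 * (x₂ : ℂ) + ξ0 i)
        + (pb j * (x₁ : ℂ) - (pb j) ^ 2 * (x₂ : ℂ) + ξb0 j)) / (p i + pb j)
      + Complex.exp ((q i * (y₁ : ℂ) + η0 i) + (qb j * (y₁ : ℂ) + ηb0 j)) / (q i + qb j)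

/-- `τ₀ = det A`. -/
noncomputable def tau0 (N : ℕ) (p pb q qb ξ0 ξb0 η0 ηb0 : Fin N → ℂ)
    (x₁ x₂ y₁ : ℝ) : ℂ :=
  (gramA N p pb q qb ξ0 ξb0 η0 ηb0 x₁ x₂ y₁).det

/-- `τ₁ = det [[A, Φᵀ],[−Ψ̄, 0]]` with `Φᵢ = e^{ξᵢ}`, `Ψ̄ⱼ = e^{η̄ⱼ}`. -/
noncomputable def tau1 (N : ℕ) (p pb q qb ξ0 ξb0 η0 ηb0 : Fin N → ℂ)
    (x₁ x₂ y₁ : ℝ) : ℂ :=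
  Matrix.det (Matrix.of fun i j : Fin (N + 1) =>
    if hi : (i : ℕ) < N then
      if hj : (j : ℕ) < N then
        gramA N p pb q qb ξ0 ξb0 η0 ηb0 x₁ x₂ y₁ ⟨i, hi⟩ ⟨j, hj⟩
      else
        Complex.exp (p ⟨i, hi⟩ * (x₁ : ℂ) + (p ⟨i, hi⟩) ^ 2 * (x₂ : ℂ) + ξ0 ⟨i, hi⟩)
    else
      if hj : (j : ℕ) < N then
        -Complex.exp (qb ⟨j, hj⟩ * (y₁ : ℂ) + ηb0 ⟨j, hj⟩)
      else 0)


/-!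
Write `[u; v]` for the determinant of `A` bordered by the column `u` and the row `-v`, and
`[u, b; v, d]` for the doubly bordered one. Since `∂_{x₁}A = Φᵀ Φ̄` has rank one, differentiating
a determinant borders it. With primes for `∂_{x₁}` one gets `∂_{x₁}τ₀ = [Φ; Φ̄]` and
`∂_{x₁}τ₁ = [Φ'; Ψ̄]`, the extra term `[Φ, Φ; Ψ̄, Φ̄]` having a repeated column. Differentiating
once more, and using `∂_{x₂}A = Φ'ᵀ Φ̄ - Φᵀ Φ̄'` and `∂_{x₂}Φ = Φ''`, the bilinear expression
collapses to `2 ([Φ, Φ'; Ψ̄, Φ̄] det A - [Φ; Ψ̄] [Φ'; Φ̄] + [Φ; Φ̄] [Φ'; Ψ̄])`, which vanishes by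
the Jacobi identity.
-/

section BorderedDet

variable {n R : Type*} [Fintype n] [DecidableEq n] [CommRing R] (A : Matrix n n R)

/-- The bordered determinant `det [[A, uᵀ], [-v, 0]]`, in terms of which `τ₁` and the derivatives of
`τ₀` and `τ₁` are expressed. The sign of the bottom row makes it equal to `v adj(A) uᵀ`. -/
def borderedDet (u v : n → R) : R :=
  (fromBlocks A (replicateCol (Fin 1) u) (replicateRow (Fin 1) (-v)) 0).det

theorem det_updateCol_add_vecMulVec (u v : n → R) (j : n) :
    ((A + vecMulVec u v).updateCol j u).det = (A.updateCol j u).det := by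
  rw [← det_transpose, ← det_transpose (A.updateCol j u)]
  refine det_eq_of_forall_row_eq_smul_add_const (Function.update v j 0) j (by simp) fun k i => ?_
  rcases eq_or_ne k j with rfl | hk
  · simp
  · simp [hk, vecMulVec_apply, mul_comm]

theorem det_add_vecMulVec (u v : n → R) :
    (A + vecMulVec u v).det = A.det + v ⬝ᵥ A.adjugate *ᵥ u := by
  induction v using Pi.single_induction generalizing A with
  | zero => simp
  | add v w hv hw =>
    have cramer_eq : (A + vecMulVec u v).adjugate *ᵥ u = A.adjugate *ᵥ u := by
      ext j
      simp only [← cramer_eq_adjugate_mulVec, cramer_apply, det_updateCol_add_vecMulVec]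
    rw [vecMulVec_add, ← add_assoc, hw, hv, cramer_eq, add_dotProduct, add_assoc]
  | single j c =>
    have update_eq : A + vecMulVec u (Pi.single j c)
        = A.updateCol j ((fun i => A i j) + c • u) := by
      ext i k
      rcases eq_or_ne k j with rfl | hk
      · simp [vecMulVec_apply, mul_comm]
      · simp [hk, vecMulVec_apply]
    rw [update_eq, det_updateCol_add, det_updateCol_smul, updateCol_eq_self, single_dotProduct,
      ← cramer_eq_adjugate_mulVec, cramer_apply]

theorem borderedDet_eq_det_add_vecMulVec_sub_det (u v : n → R) :
    borderedDet A u v = (A + vecMulVec u v).det - A.det := by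
  let B (row : n ⊕ Fin 1 → R) : Matrix (n ⊕ Fin 1) (n ⊕ Fin 1) R :=
    (fromBlocks A (replicateCol (Fin 1) u) 0 0).updateRow (Sum.inr 0) row
  have hB (w : n → R) (c : R) : B (Sum.elim w fun _ => c) =
      fromBlocks A (replicateCol (Fin 1) u) (replicateRow (Fin 1) w) (c • 1) := by
    ext (i | i) (j | j) <;> simp [B, updateRow_apply, Fin.eq_zero]
  have schur : (B (Sum.elim (-v) fun _ => 1)).det = (A + vecMulVec u v).det := by
    have rank_one : replicateCol (Fin 1) u * replicateRow (Fin 1) (-v) = -vecMulVec u v := by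
      ext i j
      simp [Matrix.mul_apply, vecMulVec_apply]
    rw [hB, one_smul, det_fromBlocks_one₂₂, rank_one, sub_neg_eq_add]
  have triangular : (B (Sum.elim 0 fun _ => 1)).det = A.det := by
    rw [hB, one_smul, replicateRow_zero, det_fromBlocks_zero₂₁, det_one, mul_one]
  have bordered : (B (Sum.elim (-v) fun _ => 0)).det = borderedDet A u v := by
    rw [hB, zero_smul, borderedDet]
  have row_add : (Sum.elim (-v) fun _ => 1 : n ⊕ Fin 1 → R)
      = Sum.elim (-v) (fun _ => 0) + Sum.elim (0 : n → R) fun _ => 1 := by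
    ext (i | i) <;> simp
  rw [← schur, ← triangular, ← bordered, row_add, eq_sub_iff_add_eq]
  exact (det_updateRow_add ..).symm

theorem borderedDet_eq_dotProduct_adjugate_mulVec (u v : n → R) :
    borderedDet A u v = v ⬝ᵥ A.adjugate *ᵥ u := by
  rw [borderedDet_eq_det_add_vecMulVec_sub_det, det_add_vecMulVec, add_sub_cancel_left]

theorem trace_adjugate_mul_vecMulVec (u v : n → R) :
    (A.adjugate * vecMulVec u v).trace = borderedDet A u v := by
  rw [mul_vecMulVec, trace_vecMulVec, dotProduct_comm, borderedDet_eq_dotProduct_adjugate_mulVec]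

theorem borderedDet_zero_right (u : n → R) : borderedDet A u 0 = 0 := by
  rw [borderedDet_eq_dotProduct_adjugate_mulVec, zero_dotProduct]

theorem borderedDet_add_vecMulVec_same_left (u v w : n → R) :
    borderedDet (A + vecMulVec u w) u v = borderedDet A u v := by
  rw [borderedDet_eq_det_add_vecMulVec_sub_det, add_assoc, ← vecMulVec_add, det_add_vecMulVec,
    det_add_vecMulVec, add_dotProduct, borderedDet_eq_dotProduct_adjugate_mulVec]
  ring

theorem borderedDet_add_vecMulVec_same_right (u v w : n → R) :
    borderedDet (A + vecMulVec w v) u v = borderedDet A u v := by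
  rw [borderedDet_eq_det_add_vecMulVec_sub_det, add_assoc, ← add_vecMulVec, det_add_vecMulVec,
    det_add_vecMulVec, mulVec_add, dotProduct_add, borderedDet_eq_dotProduct_adjugate_mulVec]
  ring

/-- The difference on the left is the determinant of `A` bordered by both `(u, v)` and `(b, d)`, so
this is the Jacobi (Desnanot–Jacobi) identity for the doubly bordered matrix. -/
theorem det_mul_borderedDet_add_vecMulVec_sub_borderedDet (u v b d : n → R) :
    A.det * (borderedDet (A + vecMulVec u v) b d - borderedDet A b d)
      = borderedDet A u v * borderedDet A b d - borderedDet A u d * borderedDet A b v := by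
  set x := (A + vecMulVec u v).adjugate *ᵥ b with hx
  have solution : A *ᵥ x + (v ⬝ᵥ x) • u = (A + vecMulVec u v).det • b := by
    rw [← mulVec_cramer, cramer_eq_adjugate_mulVec, ← hx, add_mulVec, vecMulVec_mulVec,
      op_smul_eq_smul]
  have dot_x : v ⬝ᵥ x = borderedDet A b v := by
    rw [hx, ← borderedDet_eq_dotProduct_adjugate_mulVec, borderedDet_add_vecMulVec_same_right]
  have tested : A.det * (d ⬝ᵥ x) + borderedDet A b v * borderedDet A u d
      = (A + vecMulVec u v).det * borderedDet A b d := by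
    have := congrArg (fun y => d ⬝ᵥ A.adjugate *ᵥ y) solution
    simpa only [mulVec_add, mulVec_smul, mulVec_mulVec, adjugate_mul, smul_mulVec, one_mulVec,
      dotProduct_add, dotProduct_smul, smul_eq_mul, dot_x,
      ← borderedDet_eq_dotProduct_adjugate_mulVec] using this
  rw [borderedDet_eq_dotProduct_adjugate_mulVec (A + vecMulVec u v), ← hx]
  linear_combination tested - borderedDet A b d * borderedDet_eq_det_add_vecMulVec_sub_det A u v

end BorderedDet

section Derivatives

variable {𝕜 R n : Type*} [NontriviallyNormedField 𝕜] [NormedCommRing R] [NormedAlgebra 𝕜 R]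
  [Fintype n] [DecidableEq n]

theorem hasDerivAt_det {M : 𝕜 → Matrix n n R} {M' : Matrix n n R} {x : 𝕜}
    (hM : ∀ i j, HasDerivAt (fun s => M s i j) (M' i j) x) :
    HasDerivAt (fun s => (M s).det) ((M x).adjugate * M').trace x := by
  have term_deriv (σ : Equiv.Perm n) :
      HasDerivAt (fun s => ((Equiv.Perm.sign σ : ℤ) : R) * ∏ i, M s (σ i) i)
        (∑ i, ((Equiv.Perm.sign σ : ℤ) : R) *
          ∏ k, (M x).updateCol i (fun l => M' l i) (σ k) k) x := by
    refine ((HasDerivAt.fun_finsetProd fun i _ => hM (σ i) i).const_mul _).congr_deriv ?_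
    rw [Finset.mul_sum]
    refine Finset.sum_congr rfl fun i _ => ?_
    rw [← Finset.prod_erase_mul _ _ (Finset.mem_univ i), updateCol_self, smul_eq_mul]
    congr 2
    exact Finset.prod_congr rfl fun k hk => (updateCol_ne (Finset.ne_of_mem_erase hk)).symm
  have trace_eq : ((M x).adjugate * M').trace
      = ∑ i, ((M x).updateCol i fun l => M' l i).det :=
    Finset.sum_congr rfl fun i _ => by
      rw [← cramer_apply, cramer_eq_adjugate_mulVec]
      rfl
  simp only [trace_eq, det_apply']
  rw [Finset.sum_comm]
  exact HasDerivAt.fun_sum fun σ _ => term_deriv σ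

theorem hasDerivAt_borderedDet {A : 𝕜 → Matrix n n R} {u v : 𝕜 → n → R} {A' : Matrix n n R}
    {u' v' : n → R} {x : 𝕜} (hA : ∀ i j, HasDerivAt (fun s => A s i j) (A' i j) x)
    (hu : ∀ i, HasDerivAt (fun s => u s i) (u' i) x)
    (hv : ∀ i, HasDerivAt (fun s => v s i) (v' i) x) :
    HasDerivAt (fun s => borderedDet (A s) (u s) (v s))
      (((A x + vecMulVec (u x) (v x)).adjugate * A').trace - ((A x).adjugate * A').trace
        + borderedDet (A x) u' (v x) + borderedDet (A x) (u x) v') x := by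
  have hsum (i j) : HasDerivAt (fun s => (A s + vecMulVec (u s) (v s)) i j)
      ((A' + (vecMulVec u' (v x) + vecMulVec (u x) v')) i j) x :=
    (hA i j).add ((hu i).mul (hv j))
  simp only [borderedDet_eq_det_add_vecMulVec_sub_det (A _) (u _) (v _)]
  refine ((hasDerivAt_det hsum).sub (hasDerivAt_det hA)).congr_deriv ?_
  simp only [Matrix.mul_add, trace_add, trace_adjugate_mul_vecMulVec,
    borderedDet_add_vecMulVec_same_left, borderedDet_add_vecMulVec_same_right]
  ring

theorem hasDerivAt_borderedDet_const_right {A : 𝕜 → Matrix n n R} {u : 𝕜 → n → R}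
    {A' : Matrix n n R} {u' : n → R} {x : 𝕜}
    (hA : ∀ i j, HasDerivAt (fun s => A s i j) (A' i j) x)
    (hu : ∀ i, HasDerivAt (fun s => u s i) (u' i) x) (v : n → R) :
    HasDerivAt (fun s => borderedDet (A s) (u s) v)
      (((A x + vecMulVec (u x) v).adjugate * A').trace - ((A x).adjugate * A').trace
        + borderedDet (A x) u' v) x := by
  simpa only [Pi.zero_apply, borderedDet_zero_right, add_zero] using
    hasDerivAt_borderedDet (v' := 0) hA hu fun i => hasDerivAt_const x (v i)

theorem hirota_bilinear_borderedDet_det {A : 𝕜 → 𝕜 → Matrix n n R} {a a₁ a₂ d d₁ : 𝕜 → 𝕜 → n → R}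
    (hA_x : ∀ x t i j, HasDerivAt (fun s => A s t i j) (vecMulVec (a x t) (d x t) i j) x)
    (hA_t : ∀ x t i j, HasDerivAt (fun s => A x s i j)
      ((vecMulVec (a₁ x t) (d x t) - vecMulVec (a x t) (d₁ x t)) i j) t)
    (ha_x : ∀ x t i, HasDerivAt (fun s => a s t i) (a₁ x t i) x)
    (ha_xx : ∀ x t i, HasDerivAt (fun s => a₁ s t i) (a₂ x t i) x)
    (ha_t : ∀ x t i, HasDerivAt (fun s => a x s i) (a₂ x t i) t)
    (hd_x : ∀ x t i, HasDerivAt (fun s => d s t i) (d₁ x t i) x) (r : n → R) (x t : 𝕜) :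
    deriv (fun s => borderedDet (A x s) (a x s) r) t * (A x t).det
      - borderedDet (A x t) (a x t) r * deriv (fun s => (A x s).det) t
      - deriv (deriv fun s => borderedDet (A s t) (a s t) r) x * (A x t).det
      + 2 * deriv (fun s => borderedDet (A s t) (a s t) r) x * deriv (fun s => (A s t).det) x
      - borderedDet (A x t) (a x t) r * deriv (deriv fun s => (A s t).det) x = 0 := by
  have det_x : deriv (fun s => (A s t).det) = fun s => borderedDet (A s t) (a s t) (d s t) :=
    funext fun s => by rw [(hasDerivAt_det (hA_x s t)).deriv, trace_adjugate_mul_vecMulVec]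
  have det_xx : deriv (fun s => borderedDet (A s t) (a s t) (d s t)) x
      = borderedDet (A x t) (a₁ x t) (d x t) + borderedDet (A x t) (a x t) (d₁ x t) := by
    rw [(hasDerivAt_borderedDet (hA_x x t) (ha_x x t) (hd_x x t)).deriv]
    simp only [trace_adjugate_mul_vecMulVec, borderedDet_add_vecMulVec_same_left, sub_self,
      zero_add]
  have det_t : deriv (fun s => (A x s).det) t
      = borderedDet (A x t) (a₁ x t) (d x t) - borderedDet (A x t) (a x t) (d₁ x t) := by
    rw [(hasDerivAt_det (hA_t x t)).deriv]
    simp only [Matrix.mul_sub, trace_sub, trace_adjugate_mul_vecMulVec]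
  have bordered_x : deriv (fun s => borderedDet (A s t) (a s t) r)
      = fun s => borderedDet (A s t) (a₁ s t) r := by
    funext s
    rw [(hasDerivAt_borderedDet_const_right (hA_x s t) (ha_x s t) r).deriv]
    simp only [trace_adjugate_mul_vecMulVec, borderedDet_add_vecMulVec_same_left, sub_self,
      zero_add]
  have bordered_xx : deriv (fun s => borderedDet (A s t) (a₁ s t) r) x
      = borderedDet (A x t + vecMulVec (a₁ x t) r) (a x t) (d x t)
        - borderedDet (A x t) (a x t) (d x t) + borderedDet (A x t) (a₂ x t) r := by
    rw [(hasDerivAt_borderedDet_const_right (hA_x x t) (ha_xx x t) r).deriv]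
    simp only [trace_adjugate_mul_vecMulVec]
  have bordered_t : deriv (fun s => borderedDet (A x s) (a x s) r) t
      = borderedDet (A x t + vecMulVec (a x t) r) (a₁ x t) (d x t)
        - borderedDet (A x t) (a₁ x t) (d x t) + borderedDet (A x t) (a₂ x t) r := by
    rw [(hasDerivAt_borderedDet_const_right (hA_t x t) (ha_t x t) r).deriv]
    simp only [Matrix.mul_sub, trace_sub, trace_adjugate_mul_vecMulVec,
      borderedDet_add_vecMulVec_same_left]
    ring
  rw [det_x, bordered_x, det_xx, bordered_xx, det_t, bordered_t]
  linear_combination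
    det_mul_borderedDet_add_vecMulVec_sub_borderedDet (A x t) (a x t) r (a₁ x t) (d x t)
      - det_mul_borderedDet_add_vecMulVec_sub_borderedDet (A x t) (a₁ x t) r (a x t) (d x t)

end Derivatives

section GramTau

/-- The vector of exponentials `e^{kᵢx + ωᵢw + cᵢ}`. `Φ` and `Φ̄` are plane waves
in `(x₁, x₂)` with frequencies `p²` and `-p̄²`; `Ψ` and `Ψ̄` are plane waves in `y₁` alone, encoded
by zero frequency and second argument `0`. -/
noncomputable def planeWave {ι : Type*} (k ω c : ι → ℂ) (x w : ℝ) (i : ι) : ℂ :=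
  Complex.exp (k i * x + ω i * w + c i)

theorem hasDerivAt_planeWave_fst {ι : Type*} (k ω c : ι → ℂ) (x w : ℝ) (i : ι) :
    HasDerivAt (fun s => planeWave k ω c s w i) (k i * planeWave k ω c x w i) x := by
  have := ((((hasDerivAt_id (x : ℂ)).const_mul (k i)).add_const (ω i * w + c i)).cexp).comp_ofReal
  simpa [planeWave, add_assoc, mul_comm] using this

theorem hasDerivAt_planeWave_snd {ι : Type*} (k ω c : ι → ℂ) (x w : ℝ) (i : ι) :
    HasDerivAt (fun s => planeWave k ω c x s i) (ω i * planeWave k ω c x w i) w := by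
  simpa only [planeWave, add_comm (k i * _)] using hasDerivAt_planeWave_fst ω k c w x i

variable {N : ℕ} (p pb q qb ξ0 ξb0 η0 ηb0 : Fin N → ℂ)

theorem gramA_apply (x₁ x₂ y₁ : ℝ) (i j : Fin N) :
    gramA N p pb q qb ξ0 ξb0 η0 ηb0 x₁ x₂ y₁ i j
      = planeWave p (p ^ 2) ξ0 x₁ x₂ i * planeWave pb (-pb ^ 2) ξb0 x₁ x₂ j / (p i + pb j)
        + planeWave q 0 η0 y₁ 0 i * planeWave qb 0 ηb0 y₁ 0 j / (q i + qb j) := by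
  simp [gramA, planeWave, Complex.exp_add, sub_eq_add_neg]

theorem tau1_eq_borderedDet (x₁ x₂ y₁ : ℝ) :
    tau1 N p pb q qb ξ0 ξb0 η0 ηb0 x₁ x₂ y₁
      = borderedDet (gramA N p pb q qb ξ0 ξb0 η0 ηb0 x₁ x₂ y₁)
          (planeWave p (p ^ 2) ξ0 x₁ x₂) (planeWave qb 0 ηb0 y₁ 0) := by
  rw [tau1, ← det_submatrix_equiv_self (finSumFinEquiv (m := N) (n := 1)), borderedDet]
  congr 1
  ext (i | i) (j | j) <;> simp [planeWave]

variable {p pb}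

theorem hasDerivAt_gramA_x₁ (hp : ∀ i j, p i + pb j ≠ 0) (x₁ x₂ y₁ : ℝ) (i j : Fin N) :
    HasDerivAt (fun s => gramA N p pb q qb ξ0 ξb0 η0 ηb0 s x₂ y₁ i j)
      (vecMulVec (planeWave p (p ^ 2) ξ0 x₁ x₂) (planeWave pb (-pb ^ 2) ξb0 x₁ x₂) i j) x₁ := by
  simp only [gramA_apply, vecMulVec_apply]
  refine ((((hasDerivAt_planeWave_fst p (p ^ 2) ξ0 x₁ x₂ i).mul
    (hasDerivAt_planeWave_fst pb (-pb ^ 2) ξb0 x₁ x₂ j)).div_const _).add_const _).congr_deriv ?_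
  rw [div_eq_iff (hp i j)]
  ring

theorem hasDerivAt_gramA_x₂ (hp : ∀ i j, p i + pb j ≠ 0) (x₁ x₂ y₁ : ℝ) (i j : Fin N) :
    HasDerivAt (fun s => gramA N p pb q qb ξ0 ξb0 η0 ηb0 x₁ s y₁ i j)
      ((vecMulVec (p * planeWave p (p ^ 2) ξ0 x₁ x₂) (planeWave pb (-pb ^ 2) ξb0 x₁ x₂)
        - vecMulVec (planeWave p (p ^ 2) ξ0 x₁ x₂)
            (pb * planeWave pb (-pb ^ 2) ξb0 x₁ x₂)) i j) x₂ := by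
  simp only [gramA_apply, Matrix.sub_apply, vecMulVec_apply, Pi.mul_apply]
  refine ((((hasDerivAt_planeWave_snd p (p ^ 2) ξ0 x₁ x₂ i).mul
    (hasDerivAt_planeWave_snd pb (-pb ^ 2) ξb0 x₁ x₂ j)).div_const _).add_const _).congr_deriv ?_
  rw [div_eq_iff (hp i j)]
  simp only [Pi.neg_apply, Pi.pow_apply]
  ring

end GramTau

/-- the Gram-type tau functions satisfy the Hirota bilinear equation
`(D_{x₂} - D_{x₁}²) τ₁·τ₀ = 0`, written out as
`(∂_{x₂}τ₁)τ₀ - τ₁(∂_{x₂}τ₀) - (∂_{x₁}²τ₁)τ₀ + 2(∂_{x₁}τ₁)(∂_{x₁}τ₀) - τ₁(∂_{x₁}²τ₀) = 0`. -/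
theorem stmt4 (N : ℕ) (hN : 1 ≤ N) (p pb q qb ξ0 ξb0 η0 ηb0 : Fin N → ℂ)
    (hp : ∀ i j, p i + pb j ≠ 0) (hq : ∀ i j, q i + qb j ≠ 0) :
    ∀ x₁ x₂ y₁ : ℝ,
      deriv (fun w => tau1 N p pb q qb ξ0 ξb0 η0 ηb0 x₁ w y₁) x₂
          * tau0 N p pb q qb ξ0 ξb0 η0 ηb0 x₁ x₂ y₁
        - tau1 N p pb q qb ξ0 ξb0 η0 ηb0 x₁ x₂ y₁
          * deriv (fun w => tau0 N p pb q qb ξ0 ξb0 η0 ηb0 x₁ w y₁) x₂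
        - deriv (deriv (fun u => tau1 N p pb q qb ξ0 ξb0 η0 ηb0 u x₂ y₁)) x₁
          * tau0 N p pb q qb ξ0 ξb0 η0 ηb0 x₁ x₂ y₁
        + 2 * deriv (fun u => tau1 N p pb q qb ξ0 ξb0 η0 ηb0 u x₂ y₁) x₁
          * deriv (fun u => tau0 N p pb q qb ξ0 ξb0 η0 ηb0 u x₂ y₁) x₁
        - tau1 N p pb q qb ξ0 ξb0 η0 ηb0 x₁ x₂ y₁
          * deriv (deriv (fun u => tau0 N p pb q qb ξ0 ξb0 η0 ηb0 u x₂ y₁)) x₁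
      = 0 := by
  intro x₁ x₂ y₁
  simp only [tau1_eq_borderedDet, tau0]
  exact hirota_bilinear_borderedDet_det
    (hasDerivAt_gramA_x₁ q qb ξ0 ξb0 η0 ηb0 hp · · y₁)
    (hasDerivAt_gramA_x₂ q qb ξ0 ξb0 η0 ηb0 hp · · y₁)
    (hasDerivAt_planeWave_fst p (p ^ 2) ξ0)
    (fun x t i => (hasDerivAt_planeWave_fst p (p ^ 2) ξ0 x t i).const_mul (p i))
    (fun x t i => (hasDerivAt_planeWave_snd p (p ^ 2) ξ0 x t i).congr_deriv
      (by simp only [Pi.pow_apply, pow_two, mul_assoc]))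
    (hasDerivAt_planeWave_fst pb (-pb ^ 2) ξb0) (planeWave qb 0 ηb0 y₁ 0) x₁ x₂
end

section
/- Let N ≥ 1 and let p₁,…,p_{2N}, c₁,…,c_{2N} be complex numbers and ξ_{01},…,ξ_{0,2N} real numbers such that for j = 1,…,N: p_{N+j} = −pⱼ, c_{N+j} = −conj(cⱼ), ξ_{0,N+j} = ξ_{0j}; assume pᵢ ≠ 0, conj(pⱼ) ≠ 0 and pᵢ + conj(pⱼ) ≠ 0 for all 1 ≤ i, j ≤ 2N. For (x,t) ∈ ℝ² set Eᵢ(x,t) = (pᵢ + conj(pᵢ))x − i(pᵢ² − conj(pᵢ)²)t + ξ_{0i}, and define g(x,t) = det(G(x,t)) with G_{ij} = cᵢδ_{ij}·e^{−Eᵢ(x,t)} + (−pᵢ/conj(pⱼ))/(pᵢ + conj(pⱼ)), and ḡ(x,t) = det(Ḡ(x,t)) with Ḡ_{ij} = cᵢδ_{ij}·e^{−Eᵢ(x,t)} + (−conj(pⱼ)/pᵢ)/(pᵢ + conj(pⱼ)). Then for all (x,t): ḡ(x,t) = conj(g(−x,t)). -/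
open Complex Matrix ComplexConjugate

/-- `Eᵢ(x,t) = (pᵢ + pᵢ*)x - i(pᵢ² - (pᵢ*)²)t + ξ_{0i}`. -/
noncomputable def Efun (N : ℕ) (p : Fin (N + N) → ℂ) (ξ0 : Fin (N + N) → ℝ)
    (i : Fin (N + N)) (x t : ℝ) : ℂ :=
  (p i + conj (p i)) * (x : ℂ)
    - Complex.I * ((p i) ^ 2 - (conj (p i)) ^ 2) * (t : ℂ) + (ξ0 i : ℂ)

/-- `g(x,t) = det(cᵢδ_{ij} e^{-Eᵢ} + (-pᵢ/pⱼ*)/(pᵢ + pⱼ*))`. -/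
noncomputable def gGram (N : ℕ) (p c : Fin (N + N) → ℂ) (ξ0 : Fin (N + N) → ℝ)
    (x t : ℝ) : ℂ :=
  Matrix.det (Matrix.of fun i j : Fin (N + N) =>
    (if i = j then c i * Complex.exp (-(Efun N p ξ0 i x t)) else 0)
      + (-(p i) / conj (p j)) / (p i + conj (p j)))

/-- `ḡ(x,t) = det(cᵢδ_{ij} e^{-Eᵢ} + (-pⱼ*/pᵢ)/(pᵢ + pⱼ*))`. -/
noncomputable def gbGram (N : ℕ) (p c : Fin (N + N) → ℂ) (ξ0 : Fin (N + N) → ℝ)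
    (x t : ℝ) : ℂ :=
  Matrix.det (Matrix.of fun i j : Fin (N + N) =>
    (if i = j then c i * Complex.exp (-(Efun N p ξ0 i x t)) else 0)
      + (-(conj (p j)) / p i) / (p i + conj (p j)))

/-!
The half-swap `i ↦ i ± N` of the indices turns `p` into `-p` and `c` into `-conj c`. On the Gram
matrices of the tau functions this change of parameters, combined with `x ↦ -x` and `k ↦ -k`,
amounts to `M ↦ -Mᴴ`. Permuting rows and columns simultaneously leaves a determinant unchanged,
`Mᴴ` has the conjugate determinant, and the sign disappears because the size is even:
`pᵢ + conj pᵢ ≠ 0` means that no `pᵢ` is imaginary, and the permutation swaps the indices with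
`0 < Re pᵢ` and those with `Re pᵢ < 0`.
-/

section General

theorem inv_neg_div {K : Type*} [DivisionRing K] (a b : K) : (-a / b)⁻¹ = -b / a := by
  rw [inv_div, div_neg, neg_div]

variable {ι : Type*} [Fintype ι]

theorem even_card_of_perm_apply_iff_not (e : Equiv.Perm ι) {P : ι → Prop}
    (h : ∀ i, P (e i) ↔ ¬P i) : Even (Fintype.card ι) := by
  classical
  have hcard : Fintype.card {i // P i} = Fintype.card {i // ¬P i} :=
    (Fintype.card_congr (e.subtypeEquiv fun i => (h i).symm)).symm
  refine ⟨Fintype.card {i // P i}, ?_⟩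
  calc Fintype.card ι = Fintype.card {i // P i} + Fintype.card {i // ¬P i} := by
        rw [← Fintype.card_sum, Fintype.card_congr (Equiv.sumCompl P)]
    _ = Fintype.card {i // P i} + Fintype.card {i // P i} := by rw [← hcard]

theorem det_eq_star_det_of_submatrix_eq_neg_conjTranspose {R : Type*} [CommRing R] [StarRing R]
    [DecidableEq ι] (hι : Even (Fintype.card ι)) (e : Equiv.Perm ι) {A B : Matrix ι ι R}
    (h : A.submatrix e e = -Bᴴ) : A.det = star B.det := by
  rw [← det_submatrix_equiv_self e A, h, det_neg, hι.neg_one_pow, one_mul, det_conjTranspose]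

theorem comp_finAddFlip_of_apply_addNat {α : Type*} {N : ℕ} {f : Fin (N + N) → α} {τ : α → α}
    (hτ : Function.Involutive τ) (hf : ∀ j : Fin N, f (j.addNat N) = τ (f (j.castAdd N))) :
    f ∘ finAddFlip = τ ∘ f := by
  have hf' (j : Fin N) : f (j.natAdd N) = τ (f (j.castAdd N)) := by
    rw [← hf]
    congr 1
    ext
    exact Nat.add_comm _ _
  funext i
  induction i using Fin.addCases with
  | left j => simp only [Function.comp_apply, finAddFlip_apply_castAdd, hf']
  | right j => simp only [Function.comp_apply, finAddFlip_apply_natAdd, hf', hτ _]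

end General

/-- The phase `ξ + ξ̄` of the soliton with spectral parameter `p` and real shift `ξ`, in the
variables `x₁ = x`, `x₂ = -it` of the KP hierarchy. -/
noncomputable def solitonPhase (p : ℂ) (ξ x t : ℝ) : ℂ :=
  (p + conj p) * (x : ℂ) - I * (p ^ 2 - conj p ^ 2) * (t : ℂ) + (ξ : ℂ)

theorem solitonPhase_neg (p : ℂ) (ξ x t : ℝ) :
    solitonPhase (-p) ξ x t = conj (solitonPhase p ξ (-x) t) := by
  simp only [solitonPhase, map_add, map_sub, map_mul, map_pow, map_neg, conj_conj, conj_ofReal,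
    conj_I, ofReal_neg]
  ring

section GramTau

variable {ι : Type*}

/-- The part of the `k`-th Gram matrix not depending on `x` and `t`, with entries
`(-pᵢ / conj pⱼ)ᵏ / (pᵢ + conj pⱼ)`. -/
noncomputable def gramKernel (k : ℤ) (p : ι → ℂ) : Matrix ι ι ℂ :=
  of fun i j => (-p i / conj (p j)) ^ k / (p i + conj (p j))

theorem gramKernel_neg (k : ℤ) (p : ι → ℂ) : gramKernel k (-p) = -gramKernel k p := by
  ext i j
  simp only [gramKernel, of_apply, Matrix.neg_apply, Pi.neg_apply, map_neg, ← neg_add, div_neg,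
    neg_div, neg_neg]

theorem conjTranspose_gramKernel (k : ℤ) (p : ι → ℂ) :
    (gramKernel k p)ᴴ = gramKernel (-k) p := by
  ext i j
  simp only [gramKernel, conjTranspose_apply, of_apply, ← starRingEnd_apply, map_div₀, map_zpow₀,
    map_add, map_neg, conj_conj, ← inv_neg_div (p i), _root_.inv_zpow', add_comm]

variable [DecidableEq ι]

/-- The Gram matrix of the `k`-th tau function of the single-component KP hierarchy, after the
exponentials `e^{ξᵢ + ξ̄ⱼ}` have been factored out. -/
noncomputable def gramMatrix (k : ℤ) (p c : ι → ℂ) (ξ : ι → ℝ) (x t : ℝ) : Matrix ι ι ℂ :=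
  diagonal (fun i => c i * exp (-solitonPhase (p i) (ξ i) x t)) + gramKernel k p

theorem gramMatrix_submatrix (e : Equiv.Perm ι) (k : ℤ) (p c : ι → ℂ) (ξ : ι → ℝ) (x t : ℝ) :
    (gramMatrix k p c ξ x t).submatrix e e = gramMatrix k (p ∘ e) (c ∘ e) (ξ ∘ e) x t := by
  rw [gramMatrix, submatrix_add, Pi.add_apply, Pi.add_apply, submatrix_diagonal_equiv]
  rfl

theorem gramMatrix_neg_neg_neg_star (k : ℤ) (p c : ι → ℂ) (ξ : ι → ℝ) (x t : ℝ) :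
    gramMatrix (-k) (-p) (-star c) ξ x t = -(gramMatrix k p c ξ (-x) t)ᴴ := by
  rw [gramMatrix, gramMatrix, gramKernel_neg, conjTranspose_add, conjTranspose_gramKernel,
    diagonal_conjTranspose, neg_add, diagonal_neg]
  congr 2
  funext i
  simp only [Pi.neg_apply, Pi.star_apply, solitonPhase_neg, star_mul', star_def, ← exp_conj,
    map_neg, neg_mul]

variable [Fintype ι]

/-- The `k`-th Gram-type tau function; `g` and `ḡ` are those with `k = 1` and `k = -1`. -/
noncomputable def gramTau (k : ℤ) (p c : ι → ℂ) (ξ : ι → ℝ) (x t : ℝ) : ℂ :=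
  (gramMatrix k p c ξ x t).det

theorem stmt14_general (e : Equiv.Perm ι) {p c : ι → ℂ} {ξ : ι → ℝ} (hpe : p ∘ e = -p)
    (hce : c ∘ e = -star c) (hξe : ξ ∘ e = ξ) (hp : ∀ i j, p i + conj (p j) ≠ 0)
    (k : ℤ) (x t : ℝ) : gramTau (-k) p c ξ x t = conj (gramTau k p c ξ (-x) t) := by
  have hre (i : ι) : (p i).re ≠ 0 := fun h => hp i i (by simp [add_conj, h])
  have hswap (i : ι) : 0 < (p (e i)).re ↔ ¬0 < (p i).re := by
    have hpi : p (e i) = -p i := congrFun hpe i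
    rw [hpi, neg_re, Left.neg_pos_iff, not_lt, (hre i).le_iff_lt]
  have hι : Even (Fintype.card ι) :=
    even_card_of_perm_apply_iff_not e (P := fun i => 0 < (p i).re) hswap
  refine det_eq_star_det_of_submatrix_eq_neg_conjTranspose hι e ?_
  rw [gramMatrix_submatrix, hpe, hce, hξe, gramMatrix_neg_neg_neg_star]

end GramTau

theorem gGram_eq_gramTau (N : ℕ) (p c : Fin (N + N) → ℂ) (ξ0 : Fin (N + N) → ℝ) (x t : ℝ) :
    gGram N p c ξ0 x t = gramTau 1 p c ξ0 x t := by
  rw [gGram, gramTau]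
  congr 1
  ext i j
  simp only [gramMatrix, gramKernel, zpow_one, Matrix.add_apply, diagonal_apply, of_apply]
  rfl

theorem gbGram_eq_gramTau (N : ℕ) (p c : Fin (N + N) → ℂ) (ξ0 : Fin (N + N) → ℝ) (x t : ℝ) :
    gbGram N p c ξ0 x t = gramTau (-1) p c ξ0 x t := by
  rw [gbGram, gramTau]
  congr 1
  ext i j
  simp only [gramMatrix, gramKernel, _root_.zpow_neg_one, inv_neg_div, Matrix.add_apply,
    diagonal_apply, of_apply]
  rfl

/-- symmetry lemma for σ = 1, nonzero boundary conditions, `g`-part: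
with `p_{N+j} = -pⱼ`, `c_{N+j} = -cⱼ*`, `ξ_{0,N+j} = ξ_{0j}`, `pᵢ ≠ 0`, `pⱼ* ≠ 0`
and `pᵢ + pⱼ* ≠ 0`, we have `ḡ(x,t) = conj (g(-x,t))` for all `(x,t)`. -/
theorem stmt14 (N : ℕ) (hN : 1 ≤ N) (p c : Fin (N + N) → ℂ) (ξ0 : Fin (N + N) → ℝ)
    (hpc : ∀ j : Fin N, p (j.addNat N) = -p (j.castAdd N))
    (hcc : ∀ j : Fin N, c (j.addNat N) = -conj (c (j.castAdd N)))
    (hξ : ∀ j : Fin N, ξ0 (j.addNat N) = ξ0 (j.castAdd N))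
    (hp0 : ∀ i, p i ≠ 0) (hpc0 : ∀ j, conj (p j) ≠ 0)
    (hp : ∀ i j, p i + conj (p j) ≠ 0) :
    ∀ x t : ℝ, gbGram N p c ξ0 x t = conj (gGram N p c ξ0 (-x) t) := by
  intro x t
  have hτ : Function.Involutive fun z : ℂ => -conj z := fun z => by simp
  rw [gbGram_eq_gramTau, gGram_eq_gramTau]
  exact stmt14_general finAddFlip (comp_finAddFlip_of_apply_addNat neg_involutive hpc)
    (comp_finAddFlip_of_apply_addNat hτ hcc)
    (comp_finAddFlip_of_apply_addNat (τ := id) (fun _ => rfl) hξ) hp 1 x t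
end
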